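/- arXiv:2410.08830 — 9 statements merged into one kernel-verified Lean document; each statement's English description precedes it below -/
import Mathlib

section
/- The permitted operator is a Poincaré operator: for every integer k and every u ∈ Λ^k, d_{k-1}(p_k u) + p_{k+1}(d_k u) = u. -/
open scoped RealInnerProductSpace

/-! The defect `e = d (p u) + p (d u) - u` vanishes because it lies in `B` and is killed by
`proj ∘ d`, which is injective on `B`. Indeed `proj (d (p u)) = proj u` and `p (d u) ∈ B` give
`proj e = 0`, and `ker proj = B`; while `d ∘ d = 0` and `proj (d (p (d u))) = proj (d u)` give
`proj (d e) = 0`. -/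

/-- CONTEXT: `Λ k` (k ∈ ℤ) are finite-dimensional real inner product spaces,
`d k : Λ k →ₗ Λ (k+1)` forms an exact sequence, `B k ⊕ R k = Λ k` is a p-permitting
decomposition with projection `proj k` onto `R k` along `B k`, such that
`proj (k+1) ∘ d k` restricted to `B k` is a bijection onto `R (k+1)`.
Indices are uniformly shifted (using `k+1` in place of `k-1`-style indices), which is an
equivalent quantification since k ranges over all of ℤ. The permitted operator
`p k : Λ (k+1) →ₗ Λ k` (the paper's `p_{k+1}`) maps into `B k` and satisfies
`proj (k+1) (d k (p k u)) = proj (k+1) u`.  The conclusion is the Poincaré identity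
`d_{k-1}(p_k u) + p_{k+1}(d_k u) = u`, stated at level `k+1`.
-/
theorem permitted_operator_is_poincare
    (Λ : ℤ → Type) [∀ k, NormedAddCommGroup (Λ k)]
    [∀ k, InnerProductSpace ℝ (Λ k)] [∀ k, FiniteDimensional ℝ (Λ k)]
    (d : ∀ k, Λ k →ₗ[ℝ] Λ (k + 1))
    (hexact : ∀ k, LinearMap.range (d k) = LinearMap.ker (d (k + 1)))
    (B R : ∀ k, Submodule ℝ (Λ k))
    (hcompl : ∀ k, IsCompl (B k) (R k))
    (proj : ∀ k, Λ k →ₗ[ℝ] Λ k)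
    (hprojR : ∀ k, ∀ u ∈ R k, proj k u = u)
    (hprojB : ∀ k, ∀ u ∈ B k, proj k u = 0)
    (hinj : ∀ k, ∀ b ∈ B k, proj (k + 1) (d k b) = 0 → b = 0)
    (hsurj : ∀ k, ∀ r ∈ R (k + 1), ∃ b ∈ B k, proj (k + 1) (d k b) = r)
    (p : ∀ k, Λ (k + 1) →ₗ[ℝ] Λ k)
    (hpB : ∀ k u, p k u ∈ B k)
    (hp : ∀ k u, proj (k + 1) (d k (p k u)) = proj (k + 1) u) :
    ∀ (k : ℤ) (u : Λ (k + 1)), d k (p k u) + p (k + 1) (d (k + 1) u) = u := by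
  intro k u
  have hdd : d (k + 1) (d k (p k u)) = 0 := by
    have h : d k (p k u) ∈ LinearMap.range (d k) := ⟨_, rfl⟩
    rwa [hexact k] at h
  have hker : ∀ x : Λ (k + 1), proj (k + 1) x = 0 → x ∈ B (k + 1) := by
    intro x hx
    obtain ⟨b, hb, r, hr, rfl⟩ :=
      Submodule.mem_sup.1 ((hcompl (k + 1)).sup_eq_top ▸ Submodule.mem_top : x ∈ B (k + 1) ⊔ R (k + 1))
    rw [map_add, hprojB _ b hb, hprojR _ r hr, zero_add] at hx
    simpa [hx] using hb
  refine sub_eq_zero.1 (hinj (k + 1) _ (hker _ ?_) ?_)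
  · rw [map_sub, map_add, hp, hprojB _ _ (hpB _ _), add_zero, sub_self]
  · rw [map_sub, map_add, hdd, zero_add, map_sub, hp, sub_self]
end

section
/- The permitted operator induces an exact sequence of negative grade: for every integer k, range(p_{k+1}) = ker(p_k), where p_{k+1} : Λ^{k+1} → Λ^k and p_k : Λ^k → Λ^{k-1}. -/
/-!
Both sides equal `B (k + 1)`. The equation `proj (d (p u)) = proj u` and injectivity of `proj ∘ d`
on `B` give `ker p = ker proj = B`. The range of `p` lies in `B`, and it is all of `B` because the
same injectivity forces `p (d b) = b` for `b ∈ B`.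
-/

open scoped RealInnerProductSpace

/-- CONTEXT: `Λ k` (k ∈ ℤ) are finite-dimensional real inner product spaces,
`d k : Λ k →ₗ Λ (k+1)` forms an exact sequence, `B k ⊕ R k = Λ k` is a p-permitting
decomposition with projection `proj k` onto `R k` along `B k`, such that
`proj (k+1) ∘ d k` restricted to `B k` is a bijection onto `R (k+1)`.
Indices are uniformly shifted (using `k+1` in place of `k-1`-style indices), which is an
equivalent quantification since k ranges over all of ℤ. The permitted operator induces an
exact sequence of negative grade: `range (p (k+1)) = ker (p k)` inside `Λ (k+1)`, which is the
paper's `Ran(p_{k+1}) = Ker(p_k)` for all k ∈ ℤ (shifted).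
-/
theorem permitted_operator_exact_sequence
    (Λ : ℤ → Type) [∀ k, NormedAddCommGroup (Λ k)]
    [∀ k, InnerProductSpace ℝ (Λ k)] [∀ k, FiniteDimensional ℝ (Λ k)]
    (d : ∀ k, Λ k →ₗ[ℝ] Λ (k + 1))
    (hexact : ∀ k, LinearMap.range (d k) = LinearMap.ker (d (k + 1)))
    (B R : ∀ k, Submodule ℝ (Λ k))
    (hcompl : ∀ k, IsCompl (B k) (R k))
    (proj : ∀ k, Λ k →ₗ[ℝ] Λ k)
    (hprojR : ∀ k, ∀ u ∈ R k, proj k u = u)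
    (hprojB : ∀ k, ∀ u ∈ B k, proj k u = 0)
    (hinj : ∀ k, ∀ b ∈ B k, proj (k + 1) (d k b) = 0 → b = 0)
    (hsurj : ∀ k, ∀ r ∈ R (k + 1), ∃ b ∈ B k, proj (k + 1) (d k b) = r)
    (p : ∀ k, Λ (k + 1) →ₗ[ℝ] Λ k)
    (hpB : ∀ k u, p k u ∈ B k)
    (hp : ∀ k u, proj (k + 1) (d k (p k u)) = proj (k + 1) u) :
    ∀ k : ℤ, LinearMap.range (p (k + 1)) = LinearMap.ker (p k) := by
  intro k
  apply le_antisymm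
  · rintro _ ⟨w, rfl⟩
    rw [LinearMap.mem_ker]
    apply hinj k _ (hpB k _)
    rw [hp, hprojB _ _ (hpB (k + 1) w)]
  · intro u hu
    rw [LinearMap.mem_ker] at hu
    have hpu : proj (k + 1) u = 0 := by rw [← hp, hu, map_zero, map_zero]
    have huB : u ∈ B (k + 1) := by
      obtain ⟨b, hb, r, hr, rfl⟩ :=
        Submodule.mem_sup.1 ((hcompl (k + 1)).sup_eq_top ▸ Submodule.mem_top (x := u))
      rw [map_add, hprojB _ b hb, hprojR _ r hr, zero_add] at hpu
      rwa [hpu, add_zero]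
    -- `p` is a left inverse of `d` on `B`, so `d u` is a preimage of `u`.
    refine ⟨d (k + 1) u, sub_eq_zero.1 ?_⟩
    apply hinj (k + 1) _ (Submodule.sub_mem _ (hpB _ _) huB)
    rw [map_sub, map_sub, hp, sub_self]
end

section
/- For every linear functional f̄ : B^k → ℝ there exists a unique ū ∈ B^k such that ⟨d_k ū, d_k ū'⟩ = f̄(ū') for all ū' ∈ B^k. -/
/-!
The map `d k` is injective on `B k`, because `proj (k + 1) ∘ d k` already is. Hence the symmetric
form `⟪d k u, d k v⟫` is positive definite on `B k`, and the map `u ↦ ⟪d k u, d k ·⟫` from `B k` to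
its dual is injective. The two spaces have the same finite dimension, so this map is bijective.
-/

open scoped RealInnerProductSpace

/-- CONTEXT: `Λ k` (k ∈ ℤ) are finite-dimensional real inner product spaces,
`d k : Λ k →ₗ Λ (k+1)` forms an exact sequence, `B k ⊕ R k = Λ k` is a p-permitting
decomposition with projection `proj k` onto `R k` along `B k`, such that
`proj (k+1) ∘ d k` restricted to `B k` is a bijection onto `R (k+1)`.
Indices are uniformly shifted (using `k+1` in place of `k-1`-style indices), which is an
equivalent quantification since k ranges over all of ℤ. Conclusion: for every linear functional
`fb : B k →ₗ ℝ` there is a unique `ub ∈ B k` with `⟪d k ub, d k ub'⟫ = fb ub'` for all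
`ub' ∈ B k`.
-/
theorem wellposed_dd_on_B
    (Λ : ℤ → Type) [∀ k, NormedAddCommGroup (Λ k)]
    [∀ k, InnerProductSpace ℝ (Λ k)] [∀ k, FiniteDimensional ℝ (Λ k)]
    (d : ∀ k, Λ k →ₗ[ℝ] Λ (k + 1))
    (hexact : ∀ k, LinearMap.range (d k) = LinearMap.ker (d (k + 1)))
    (B R : ∀ k, Submodule ℝ (Λ k))
    (hcompl : ∀ k, IsCompl (B k) (R k))
    (proj : ∀ k, Λ k →ₗ[ℝ] Λ k)
    (hprojR : ∀ k, ∀ u ∈ R k, proj k u = u)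
    (hprojB : ∀ k, ∀ u ∈ B k, proj k u = 0)
    (hinj : ∀ k, ∀ b ∈ B k, proj (k + 1) (d k b) = 0 → b = 0)
    (hsurj : ∀ k, ∀ r ∈ R (k + 1), ∃ b ∈ B k, proj (k + 1) (d k b) = r)
    (k : ℤ) (fb : (B k) →ₗ[ℝ] ℝ) :
    ∃! ub : B k, ∀ ub' : B k, ⟪d k (ub : Λ k), d k (ub' : Λ k)⟫ = fb ub' := by
  let A : B k →ₗ[ℝ] Λ (k + 1) := (d k).domRestrict (B k)
  let T : B k →ₗ[ℝ] Module.Dual ℝ (B k) := (innerₗ (Λ (k + 1))).compl₁₂ A A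
  have hT : ∀ u v : B k, T u v = ⟪d k (u : Λ k), d k (v : Λ k)⟫ := fun _ _ => rfl
  have hTinj : Function.Injective T := by
    refine (injective_iff_map_eq_zero T).2 fun u hu => ?_
    have h0 : ⟪d k (u : Λ k), d k (u : Λ k)⟫ = 0 := by rw [← hT, hu]; rfl
    have hd : d k (u : Λ k) = 0 := inner_self_eq_zero.1 h0
    exact Subtype.ext (hinj k u u.2 (by rw [hd, map_zero]))
  have hTsurj : Function.Surjective T :=
    (LinearMap.injective_iff_surjective_of_finrank_eq_finrank
      Subspace.dual_finrank_eq.symm).1 hTinj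
  obtain ⟨u, hu⟩ := hTsurj fb
  refine ⟨u, fun v => by rw [← hT, hu], fun w hw => hTinj ?_⟩
  rw [hu]
  exact LinearMap.ext fun v => by rw [hT, hw]
end

section
/- Given a p-permitting decomposition, for every integer k the space Λ^k decomposes as the internal direct sum Λ^k = B^k ⊕ d_{k-1}(B^{k-1}); that is, B^k ∩ d_{k-1}(B^{k-1}) = {0} and B^k + d_{k-1}(B^{k-1}) = Λ^k. Moreover, for every u ∈ Λ^k the decomposition is given explicitly by u = p_{k+1}(d_k u) + d_{k-1}(p_k u), with p_{k+1}(d_k u) ∈ B^k and p_k u ∈ B^{k-1}. -/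
open scoped RealInnerProductSpace

/-!
For `u` in degree `k + 1`, the defining property of `p` says that `u` and `d (p u)` have the same
projection onto `R`, so `w = u - d (p u)` lies in `B`. Since `d ∘ d = 0`, we have `d w = d u`, so
both `w` and `p (d u)` are elements of `B` whose differential projects to the same element as
`d u`; injectivity of `proj ∘ d` on `B` gives `w = p (d u)`. This is the explicit formula, and it
shows that `B` and `d B` span. If `d b ∈ B` with `b ∈ B`, then `proj (d b) = 0`, hence `b = 0` by
the same injectivity, and the sum is direct.
-/

/-- CONTEXT: `Λ k` (k ∈ ℤ) are finite-dimensional real inner product spaces,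
`d k : Λ k →ₗ Λ (k+1)` forms an exact sequence, `B k ⊕ R k = Λ k` is a p-permitting
decomposition with projection `proj k` onto `R k` along `B k`, such that
`proj (k+1) ∘ d k` restricted to `B k` is a bijection onto `R (k+1)`.
Indices are uniformly shifted (using `k+1` in place of `k-1`-style indices), which is an
equivalent quantification since k ranges over all of ℤ. Conclusion (stated at level `k+1`):
`Λ (k+1) = B (k+1) ⊕ (d k)(B k)` as an internal direct sum, and for every `u`,
`u = p (k+1) (d (k+1) u) + d k (p k u)` with `p (k+1) (d (k+1) u) ∈ B (k+1)` and
`p k u ∈ B k`.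
-/
theorem decomposition_B_oplus_dB
    (Λ : ℤ → Type) [∀ k, NormedAddCommGroup (Λ k)]
    [∀ k, InnerProductSpace ℝ (Λ k)] [∀ k, FiniteDimensional ℝ (Λ k)]
    (d : ∀ k, Λ k →ₗ[ℝ] Λ (k + 1))
    (hexact : ∀ k, LinearMap.range (d k) = LinearMap.ker (d (k + 1)))
    (B R : ∀ k, Submodule ℝ (Λ k))
    (hcompl : ∀ k, IsCompl (B k) (R k))
    (proj : ∀ k, Λ k →ₗ[ℝ] Λ k)
    (hprojR : ∀ k, ∀ u ∈ R k, proj k u = u)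
    (hprojB : ∀ k, ∀ u ∈ B k, proj k u = 0)
    (hinj : ∀ k, ∀ b ∈ B k, proj (k + 1) (d k b) = 0 → b = 0)
    (hsurj : ∀ k, ∀ r ∈ R (k + 1), ∃ b ∈ B k, proj (k + 1) (d k b) = r)
    (p : ∀ k, Λ (k + 1) →ₗ[ℝ] Λ k)
    (hpB : ∀ k u, p k u ∈ B k)
    (hp : ∀ k u, proj (k + 1) (d k (p k u)) = proj (k + 1) u) :
    ∀ k : ℤ,
      B (k + 1) ⊓ Submodule.map (d k) (B k) = ⊥ ∧
      B (k + 1) ⊔ Submodule.map (d k) (B k) = ⊤ ∧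
      (∀ u : Λ (k + 1), u = p (k + 1) (d (k + 1) u) + d k (p k u) ∧
        p (k + 1) (d (k + 1) u) ∈ B (k + 1) ∧ p k u ∈ B k) := by
  -- The kernel of the projection onto `R j` along `B j` is contained in `B j`.
  have hker : ∀ j (w : Λ j), proj j w = 0 → w ∈ B j := by
    intro j w hw
    have hmem : w ∈ B j ⊔ R j := (hcompl j).sup_eq_top ▸ Submodule.mem_top
    obtain ⟨b, hb, r, hr, rfl⟩ := Submodule.mem_sup.mp hmem
    rw [map_add, hprojB j b hb, hprojR j r hr, zero_add] at hw
    rwa [hw, add_zero]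
  have hdd : ∀ j (x : Λ j), d (j + 1) (d j x) = 0 := fun j x =>
    LinearMap.mem_ker.mp (hexact j ▸ LinearMap.mem_range_self (d j) x)
  intro k
  have hdecomp : ∀ u : Λ (k + 1), u = p (k + 1) (d (k + 1) u) + d k (p k u) := by
    intro u
    have hw : u - d k (p k u) ∈ B (k + 1) :=
      hker _ _ (by rw [map_sub, hp, sub_self])
    -- `u - d (p u)` and `p (d u)` lie in `B`, and their differentials have the same projection.
    have h := hinj (k + 1) (p (k + 1) (d (k + 1) u) - (u - d k (p k u)))
      (Submodule.sub_mem _ (hpB _ _) hw)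
      (by rw [map_sub, map_sub, hp, map_sub, hdd, sub_zero, sub_self])
    rw [sub_eq_zero.mp h, sub_add_cancel]
  refine ⟨?_, ?_, fun u => ⟨hdecomp u, hpB _ _, hpB _ _⟩⟩
  · rw [eq_bot_iff]
    rintro x ⟨hx, b, hb, rfl⟩
    rw [hinj k b hb (hprojB _ _ hx), map_zero]
    exact Submodule.zero_mem _
  · rw [eq_top_iff]
    intro u _
    rw [hdecomp u]
    exact Submodule.add_mem_sup (hpB _ _) (Submodule.mem_map_of_mem (hpB _ _))
end

section
/- The Poincaré constant on B^k bounds the Poincaré constant on Λ^k: for every u ∈ Λ^k that is orthogonal to ker(d_k) with respect to the inner product of Λ^k, one has ‖u‖ ≤ c̄_k ‖d_k u‖. -/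
/-! The permitted operator produces `b = p (d u) ∈ B k` whose differential agrees with `d u` modulo
`B (k+1)`. The difference `d b - d u` is thus a closed element of `B (k+1)`, and `d` is injective
there, so `d b = d u`. Hence `u - b ∈ ker d` is orthogonal to `u`, which makes `u` the element of
least norm in `b + ker d`; therefore `‖u‖ ≤ ‖b‖ ≤ cb * ‖d b‖ = cb * ‖d u‖`. -/

open scoped RealInnerProductSpace

/-- CONTEXT: `Λ k` (k ∈ ℤ) are finite-dimensional real inner product spaces,
`d k : Λ k →ₗ Λ (k+1)` forms an exact sequence, `B k ⊕ R k = Λ k` is a p-permitting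
decomposition with projection `proj k` onto `R k` along `B k`, such that
`proj (k+1) ∘ d k` restricted to `B k` is a bijection onto `R (k+1)`.
Indices are uniformly shifted (using `k+1` in place of `k-1`-style indices), which is an
equivalent quantification since k ranges over all of ℤ. Conclusion: if `cb ≥ 0` satisfies
`‖ub‖ ≤ cb * ‖d k ub‖` for all `ub ∈ B k`, then every `u ∈ Λ k` orthogonal to
`ker (d k)` satisfies `‖u‖ ≤ cb * ‖d k u‖`.
-/
theorem poincare_constant_bound
    (Λ : ℤ → Type) [∀ k, NormedAddCommGroup (Λ k)]
    [∀ k, InnerProductSpace ℝ (Λ k)] [∀ k, FiniteDimensional ℝ (Λ k)]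
    (d : ∀ k, Λ k →ₗ[ℝ] Λ (k + 1))
    (hexact : ∀ k, LinearMap.range (d k) = LinearMap.ker (d (k + 1)))
    (B R : ∀ k, Submodule ℝ (Λ k))
    (hcompl : ∀ k, IsCompl (B k) (R k))
    (proj : ∀ k, Λ k →ₗ[ℝ] Λ k)
    (hprojR : ∀ k, ∀ u ∈ R k, proj k u = u)
    (hprojB : ∀ k, ∀ u ∈ B k, proj k u = 0)
    (hinj : ∀ k, ∀ b ∈ B k, proj (k + 1) (d k b) = 0 → b = 0)
    (hsurj : ∀ k, ∀ r ∈ R (k + 1), ∃ b ∈ B k, proj (k + 1) (d k b) = r)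
    (p : ∀ k, Λ (k + 1) →ₗ[ℝ] Λ k)
    (hpB : ∀ k u, p k u ∈ B k)
    (hp : ∀ k u, proj (k + 1) (d k (p k u)) = proj (k + 1) u)
    (k : ℤ) (cb : ℝ) (hcb0 : 0 ≤ cb)
    (hcb : ∀ ub ∈ B k, ‖ub‖ ≤ cb * ‖d k ub‖) :
    ∀ u : Λ k, (∀ w ∈ LinearMap.ker (d k), ⟪u, w⟫ = 0) → ‖u‖ ≤ cb * ‖d k u‖ := by
  intro u hu
  set b := p k (d k u) with hb
  have hbB : b ∈ B k := hpB k _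
  have hproj : proj (k + 1) (d k b - d k u) = 0 := by
    rw [map_sub, hb, hp, sub_self]
  have hmem : d k b - d k u ∈ B (k + 1) := by
    obtain ⟨x, hx, r, hr, hxr⟩ := Submodule.mem_sup.mp
      ((hcompl (k + 1)).sup_eq_top ▸ Submodule.mem_top : d k b - d k u ∈ B (k + 1) ⊔ R (k + 1))
    rw [← hxr, map_add, hprojB _ x hx, hprojR _ r hr, zero_add] at hproj
    rw [← hxr, hproj, add_zero]
    exact hx
  have hclosed : d (k + 1) (d k b - d k u) = 0 := by
    rw [← map_sub, ← LinearMap.mem_ker, ← hexact]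
    exact LinearMap.mem_range_self _ _
  have hdb : d k b = d k u :=
    sub_eq_zero.mp (hinj _ _ hmem (by rw [hclosed, map_zero]))
  have horth : ⟪u, u - b⟫ = 0 := hu _ (by rw [LinearMap.mem_ker, map_sub, hdb, sub_self])
  have hle : ‖u‖ ≤ ‖b‖ := by
    rw [inner_sub_right, real_inner_self_eq_norm_sq] at horth
    have hcs := real_inner_le_norm u b
    by_contra! h
    nlinarith [norm_nonneg b]
  calc ‖u‖ ≤ ‖b‖ := hle
    _ ≤ cb * ‖d k b‖ := hcb b hbB
    _ = cb * ‖d k u‖ := by rw [hdb]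
end

section
/- The set of Rayleigh-type ratios realized by p∘d equals that realized on B^k: the set { ‖p_{k+1}(d_k u)‖ / ‖d_k u‖ : u ∈ Λ^k, d_k u ≠ 0 } equals the set { ‖ū‖ / ‖d_k ū‖ : ū ∈ B^k, ū ≠ 0 }. -/
/-!
The ratios agree because of two identities on the complex. First, `d (p (d u)) = d u`: the
difference `x = d (p (d u)) - d u` is killed by the projection onto `R (k + 1)`, so `x ∈ B (k + 1)`,
and `d x = 0` by `d ∘ d = 0`; injectivity of `proj ∘ d` on `B (k + 1)` gives `x = 0`. Second,
`p (d b) = b` for `b ∈ B k`, by injectivity of `proj ∘ d` on `B k`. Hence `u ↦ p (d u)` and the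
inclusion `B k ⊆ Λ k` carry each set of ratios into the other.
-/

open scoped RealInnerProductSpace

/-- CONTEXT: `Λ k` (k ∈ ℤ) are finite-dimensional real inner product spaces,
`d k : Λ k →ₗ Λ (k+1)` forms an exact sequence, `B k ⊕ R k = Λ k` is a p-permitting
decomposition with projection `proj k` onto `R k` along `B k`, such that
`proj (k+1) ∘ d k` restricted to `B k` is a bijection onto `R (k+1)`.
Indices are uniformly shifted (using `k+1` in place of `k-1`-style indices), which is an
equivalent quantification since k ranges over all of ℤ. Conclusion: the set of ratios
`‖p k (d k u)‖ / ‖d k u‖` over `u ∈ Λ k` with `d k u ≠ 0` (here `p k` is the paper's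
`p_{k+1}`) equals the set of ratios `‖ub‖ / ‖d k ub‖` over nonzero `ub ∈ B k`.
-/
theorem rayleigh_ratio_sets_eq
    (Λ : ℤ → Type) [∀ k, NormedAddCommGroup (Λ k)]
    [∀ k, InnerProductSpace ℝ (Λ k)] [∀ k, FiniteDimensional ℝ (Λ k)]
    (d : ∀ k, Λ k →ₗ[ℝ] Λ (k + 1))
    (hexact : ∀ k, LinearMap.range (d k) = LinearMap.ker (d (k + 1)))
    (B R : ∀ k, Submodule ℝ (Λ k))
    (hcompl : ∀ k, IsCompl (B k) (R k))
    (proj : ∀ k, Λ k →ₗ[ℝ] Λ k)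
    (hprojR : ∀ k, ∀ u ∈ R k, proj k u = u)
    (hprojB : ∀ k, ∀ u ∈ B k, proj k u = 0)
    (hinj : ∀ k, ∀ b ∈ B k, proj (k + 1) (d k b) = 0 → b = 0)
    (hsurj : ∀ k, ∀ r ∈ R (k + 1), ∃ b ∈ B k, proj (k + 1) (d k b) = r)
    (p : ∀ k, Λ (k + 1) →ₗ[ℝ] Λ k)
    (hpB : ∀ k u, p k u ∈ B k)
    (hp : ∀ k u, proj (k + 1) (d k (p k u)) = proj (k + 1) u)
    (k : ℤ) :
    {r : ℝ | ∃ u : Λ k, d k u ≠ 0 ∧ r = ‖p k (d k u)‖ / ‖d k u‖} =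
      {r : ℝ | ∃ ub ∈ B k, ub ≠ 0 ∧ r = ‖ub‖ / ‖d k ub‖} := by
  have hdpd : ∀ u : Λ k, d k (p k (d k u)) = d k u := by
    intro u
    have hproj : proj (k + 1) (d k (p k (d k u)) - d k u) = 0 := by
      rw [map_sub, hp, sub_self]
    have hdd : ∀ v : Λ k, d (k + 1) (d k v) = 0 := fun v =>
      LinearMap.mem_ker.1 (hexact k ▸ LinearMap.mem_range_self (d k) v)
    have hmem : d k (p k (d k u)) - d k u ∈ B (k + 1) := by
      obtain ⟨b, hb, r, hr, hbr⟩ := Submodule.mem_sup.1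
        ((hcompl (k + 1)).sup_eq_top ▸ Submodule.mem_top :
          d k (p k (d k u)) - d k u ∈ B (k + 1) ⊔ R (k + 1))
      rw [← hbr, map_add, hprojB _ b hb, hprojR _ r hr, zero_add] at hproj
      rw [← hbr, hproj, add_zero]
      exact hb
    refine sub_eq_zero.1 (hinj (k + 1) _ hmem ?_)
    rw [map_sub, hdd, hdd, sub_self, map_zero]
  have hpd : ∀ b ∈ B k, p k (d k b) = b := by
    intro b hb
    refine sub_eq_zero.1 (hinj k _ ((B k).sub_mem (hpB k _) hb) ?_)
    rw [map_sub, map_sub, hp, sub_self]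
  ext r
  constructor
  · rintro ⟨u, hu, rfl⟩
    refine ⟨p k (d k u), hpB k _, fun h => hu ?_, by rw [hdpd]⟩
    rw [← hdpd u, h, map_zero]
  · rintro ⟨b, hb, hb0, rfl⟩
    refine ⟨b, fun h => hb0 (hinj k b hb ?_), by rw [hpd b hb]⟩
    rw [h, map_zero]
end

section
/- Inf-sup bound: for every u ∈ Λ^k with d_k u = 0 and u ≠ 0, there exists v ∈ Λ^{k-1} with v ≠ 0 such that ⟨d_{k-1} v, u⟩ ≥ (c̄_{k-1}² + 1)^{-1/2} · (‖v‖² + ‖d_{k-1} v‖²)^{1/2} · (‖u‖² + ‖d_k u‖²)^{1/2}. -/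
/-!
The map `d k` sends `B k` onto the kernel of `d (k + 1)`: given a cocycle `u`, choose `b ∈ B k` such that `d k b` and `u` have the same component in `R (k + 1)`.
Their difference is a cocycle lying in `B (k + 1)`, where `d (k + 1)` is injective, so `d k b = u`.
Taking `v = b` gives `⟪d k v, u⟫ = ‖u‖²`, and the Poincaré inequality `‖b‖ ≤ cb * ‖u‖` bounds the
graph norm of `b` by `√(cb² + 1) * ‖u‖`.
-/

open scoped RealInnerProductSpace

/-- CONTEXT: `Λ k` (k ∈ ℤ) are finite-dimensional real inner product spaces,
`d k : Λ k →ₗ Λ (k+1)` forms an exact sequence, `B k ⊕ R k = Λ k` is a p-permitting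
decomposition with projection `proj k` onto `R k` along `B k`, such that
`proj (k+1) ∘ d k` restricted to `B k` is a bijection onto `R (k+1)`.
Indices are uniformly shifted (using `k+1` in place of `k-1`-style indices), which is an
equivalent quantification since k ranges over all of ℤ. Conclusion (stated with `u ∈ Λ (k+1)`,
`v ∈ Λ k`, i.e. the paper's levels `k` and `k-1`): if `cb ≥ 0` bounds `‖vb‖ ≤ cb * ‖d k vb‖`
on `B k`, then for every nonzero `u` with `d (k+1) u = 0` there is a nonzero `v` with
`⟪d k v, u⟫ ≥ (cb² + 1)^{-1/2} (‖v‖² + ‖d k v‖²)^{1/2} (‖u‖² + ‖d (k+1) u‖²)^{1/2}`.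
-/
theorem inf_sup_bound
    (Λ : ℤ → Type) [∀ k, NormedAddCommGroup (Λ k)]
    [∀ k, InnerProductSpace ℝ (Λ k)] [∀ k, FiniteDimensional ℝ (Λ k)]
    (d : ∀ k, Λ k →ₗ[ℝ] Λ (k + 1))
    (hexact : ∀ k, LinearMap.range (d k) = LinearMap.ker (d (k + 1)))
    (B R : ∀ k, Submodule ℝ (Λ k))
    (hcompl : ∀ k, IsCompl (B k) (R k))
    (proj : ∀ k, Λ k →ₗ[ℝ] Λ k)
    (hprojR : ∀ k, ∀ u ∈ R k, proj k u = u)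
    (hprojB : ∀ k, ∀ u ∈ B k, proj k u = 0)
    (hinj : ∀ k, ∀ b ∈ B k, proj (k + 1) (d k b) = 0 → b = 0)
    (hsurj : ∀ k, ∀ r ∈ R (k + 1), ∃ b ∈ B k, proj (k + 1) (d k b) = r)
    (k : ℤ) (cb : ℝ) (hcb0 : 0 ≤ cb)
    (hcb : ∀ vb ∈ B k, ‖vb‖ ≤ cb * ‖d k vb‖) :
    ∀ u : Λ (k + 1), d (k + 1) u = 0 → u ≠ 0 →
      ∃ v : Λ k, v ≠ 0 ∧
        ⟪d k v, u⟫ ≥ (Real.sqrt (cb ^ 2 + 1))⁻¹ *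
          (Real.sqrt (‖v‖ ^ 2 + ‖d k v‖ ^ 2) * Real.sqrt (‖u‖ ^ 2 + ‖d (k + 1) u‖ ^ 2)) := by
  intro u hu hu0
  obtain ⟨b', hb', r, hr, hbr⟩ := Submodule.mem_sup.1
    ((hcompl (k + 1)).sup_eq_top ▸ (Submodule.mem_top : u ∈ (⊤ : Submodule ℝ (Λ (k + 1)))))
  obtain ⟨b, hb, hbu⟩ := hsurj k r hr
  have hdd : d (k + 1) (d k b) = 0 :=
    LinearMap.mem_ker.1 (hexact k ▸ LinearMap.mem_range_self (d k) b)
  -- `d k b` has `R (k + 1)`-component `r`, the same as that of `u`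
  have hdiff : d k b - r ∈ B (k + 1) := by
    obtain ⟨b₁, hb₁, r₁, hr₁, h₁⟩ := Submodule.mem_sup.1 ((hcompl (k + 1)).sup_eq_top ▸
      (Submodule.mem_top : d k b ∈ (⊤ : Submodule ℝ (Λ (k + 1)))))
    have hr₁r : r₁ = r := by
      rw [← hbu, ← h₁, map_add, hprojB _ _ hb₁, hprojR _ _ hr₁, zero_add]
    rw [← h₁, hr₁r, add_sub_cancel_right]
    exact hb₁
  have hdb : d k b = u := by
    have hmem : d k b - u ∈ B (k + 1) := by
      have h := (B (k + 1)).sub_mem hdiff hb'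
      rwa [sub_sub, add_comm r, hbr] at h
    exact sub_eq_zero.1 (hinj (k + 1) _ hmem (by rw [map_sub, hdd, hu, sub_zero, map_zero]))
  refine ⟨b, ?_, ?_⟩
  · rintro rfl
    exact hu0 (by rw [← hdb, map_zero])
  · have hpoin := hcb b hb
    rw [hdb] at hpoin ⊢
    have hgraph : Real.sqrt (‖b‖ ^ 2 + ‖u‖ ^ 2) ≤ Real.sqrt (cb ^ 2 + 1) * ‖u‖ := by
      rw [← Real.sqrt_sq (norm_nonneg u), ← Real.sqrt_mul (by positivity),
        Real.sqrt_sq (norm_nonneg u)]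
      apply Real.sqrt_le_sqrt
      nlinarith [pow_le_pow_left₀ (norm_nonneg b) hpoin 2]
    have hu_norm : Real.sqrt (‖u‖ ^ 2 + ‖d (k + 1) u‖ ^ 2) = ‖u‖ := by
      rw [hu, norm_zero, zero_pow two_ne_zero, add_zero, Real.sqrt_sq (norm_nonneg u)]
    rw [hu_norm, real_inner_self_eq_norm_sq, ge_iff_le, inv_mul_le_iff₀ (by positivity)]
    calc Real.sqrt (‖b‖ ^ 2 + ‖u‖ ^ 2) * ‖u‖
        ≤ Real.sqrt (cb ^ 2 + 1) * ‖u‖ * ‖u‖ := by gcongr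
      _ = Real.sqrt (cb ^ 2 + 1) * ‖u‖ ^ 2 := by ring
end

section
/- Four-step solver for the Hodge-Laplace problem: let g : Λ^{k-1} → ℝ and f : Λ^k → ℝ be linear functionals, and suppose v̄ ∈ B^{k-1}, w̄ ∈ B^{k-2}, ū ∈ B^k and v̄_u ∈ B^{k-1} satisfy (i) ⟨d_{k-1} v̄, d_{k-1} v̄'⟩ = f(d_{k-1} v̄') for all v̄' ∈ B^{k-1}; (ii) ⟨d_{k-2} w̄, d_{k-2} w̄'⟩ = g(d_{k-2} w̄') − ⟨v̄, d_{k-2} w̄'⟩ for all w̄' ∈ B^{k-2}; (iii) ⟨d_k ū, d_k ū'⟩ = f(ū') − ⟨d_{k-1} v̄, ū'⟩ for all ū' ∈ B^k; (iv) ⟨d_{k-1} v̄_u, d_{k-1} v̄'⟩ = ⟨v̄ + d_{k-2} w̄, v̄'⟩ − ⟨ū, d_{k-1} v̄'⟩ − g(v̄') for all v̄' ∈ B^{k-1}. Then v := v̄ + d_{k-2} w̄ and u := ū + d_{k-1} v̄_u solve the Hodge-Laplace problem: ⟨v, v'⟩ − ⟨u, d_{k-1} v'⟩ = g(v') for all v'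 ∈ Λ^{k-1}, and ⟨d_{k-1} v, u'⟩ + ⟨d_k u, d_k u'⟩ = f(u') for all u' ∈ Λ^k. -/
/-! The bijectivity of `proj (k+1) ∘ d k : B k → R (k+1)` gives the discrete Hodge-type splitting
`Λ (k+1) = B (k+1) + d k (B k)` (`exists_eq_add_d`): correct the `R`-component of a vector by
some `d k b`, and what is left lies in `B (k+1)`. Each Hodge-Laplace equation is linear in its test
vector, so it may be tested separately on the two pieces. As `d ∘ d = 0`, the four resulting
equations are exactly the four subproblems. -/

open scoped RealInnerProductSpace

/-- Every vector of the target of `d` is the sum of an element of `B'` and the image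
under `d` of an element of `B`; here `B'`, `R'` split the target and `p` is the projection onto
`R'` along `B'`. -/
lemma exists_eq_add_d {E F : Type*} [AddCommGroup E] [Module ℝ E] [AddCommGroup F] [Module ℝ F]
    (d : E →ₗ[ℝ] F) (B : Submodule ℝ E) (B' R' : Submodule ℝ F) (hc : IsCompl B' R')
    (p : F →ₗ[ℝ] F) (hR : ∀ u ∈ R', p u = u) (hB : ∀ u ∈ B', p u = 0)
    (hs : ∀ r ∈ R', ∃ b ∈ B, p (d b) = r) (x : F) :
    ∃ a ∈ B', ∃ b ∈ B, x = a + d b := by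
  have split : ∀ y : F, ∃ s ∈ B', ∃ t ∈ R', s + t = y := fun y =>
    Submodule.mem_sup.1 (hc.sup_eq_top ▸ Submodule.mem_top)
  obtain ⟨s, hsB, t, htR, rfl⟩ := split x
  obtain ⟨b, hb, hbt⟩ := hs t htR
  obtain ⟨s', hsB', t', htR', hst⟩ := split (d b)
  have ht : t' = t := by
    rw [← hst, map_add, hB s' hsB', hR t' htR', zero_add] at hbt
    exact hbt
  refine ⟨s - s', B'.sub_mem hsB hsB', b, hb, ?_⟩
  rw [← hst, ht]
  abel

/-- CONTEXT: `Λ k` (k ∈ ℤ) are finite-dimensional real inner product spaces,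
`d k : Λ k →ₗ Λ (k+1)` forms an exact sequence, `B k ⊕ R k = Λ k` is a p-permitting
decomposition with projection `proj k` onto `R k` along `B k`, such that
`proj (k+1) ∘ d k` restricted to `B k` is a bijection onto `R (k+1)`.
Indices are uniformly shifted (using `k+1` in place of `k-1`-style indices), which is an
equivalent quantification since k ranges over all of ℤ. The four-step solver: paper's level
`k` is here `k+2` (so `Λ^{k-2} = Λ k`, `Λ^{k-1} = Λ (k+1)`, `Λ^k = Λ (k+2)`).  Given the four
subproblem solutions, `v := vb + d k wb` and `u := ub + d (k+1) vub` solve the Hodge-Laplace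
problem.
-/
theorem four_step_hodge_laplace_solver
    (Λ : ℤ → Type) [∀ k, NormedAddCommGroup (Λ k)]
    [∀ k, InnerProductSpace ℝ (Λ k)] [∀ k, FiniteDimensional ℝ (Λ k)]
    (d : ∀ k, Λ k →ₗ[ℝ] Λ (k + 1))
    (hexact : ∀ k, LinearMap.range (d k) = LinearMap.ker (d (k + 1)))
    (B R : ∀ k, Submodule ℝ (Λ k))
    (hcompl : ∀ k, IsCompl (B k) (R k))
    (proj : ∀ k, Λ k →ₗ[ℝ] Λ k)
    (hprojR : ∀ k, ∀ u ∈ R k, proj k u = u)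
    (hprojB : ∀ k, ∀ u ∈ B k, proj k u = 0)
    (hinj : ∀ k, ∀ b ∈ B k, proj (k + 1) (d k b) = 0 → b = 0)
    (hsurj : ∀ k, ∀ r ∈ R (k + 1), ∃ b ∈ B k, proj (k + 1) (d k b) = r)
    (k : ℤ) (g : Λ (k + 1) →ₗ[ℝ] ℝ) (f : Λ (k + 1 + 1) →ₗ[ℝ] ℝ)
    (vb : Λ (k + 1)) (hvb : vb ∈ B (k + 1))
    (wb : Λ k) (hwb : wb ∈ B k)
    (ub : Λ (k + 1 + 1)) (hub : ub ∈ B (k + 1 + 1))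
    (vub : Λ (k + 1)) (hvub : vub ∈ B (k + 1))
    (h1 : ∀ vb' ∈ B (k + 1), ⟪d (k + 1) vb, d (k + 1) vb'⟫ = f (d (k + 1) vb'))
    (h2 : ∀ wb' ∈ B k, ⟪d k wb, d k wb'⟫ = g (d k wb') - ⟪vb, d k wb'⟫)
    (h3 : ∀ ub' ∈ B (k + 1 + 1), ⟪d (k + 1 + 1) ub, d (k + 1 + 1) ub'⟫ = f ub' - ⟪d (k + 1) vb, ub'⟫)
    (h4 : ∀ vb' ∈ B (k + 1), ⟪d (k + 1) vub, d (k + 1) vb'⟫ =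
      ⟪vb + d k wb, vb'⟫ - ⟪ub, d (k + 1) vb'⟫ - g vb') :
    (∀ v' : Λ (k + 1), ⟪vb + d k wb, v'⟫ - ⟪ub + d (k + 1) vub, d (k + 1) v'⟫ = g v') ∧
    (∀ u' : Λ (k + 1 + 1), ⟪d (k + 1) (vb + d k wb), u'⟫ +
      ⟪d (k + 1 + 1) (ub + d (k + 1) vub), d (k + 1 + 1) u'⟫ = f u') := by
  have hdd : ∀ j x, d (j + 1) (d j x) = 0 := fun j x => by
    rw [← LinearMap.mem_ker, ← hexact]
    exact LinearMap.mem_range_self _ x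
  have hsplit := fun j => exists_eq_add_d (d j) (B j) (B (j + 1)) (R (j + 1)) (hcompl _)
    (proj (j + 1)) (hprojR _) (hprojB _) (hsurj j)
  constructor
  · intro v'
    obtain ⟨a, ha, b, hb, rfl⟩ := hsplit k v'
    have e4 := h4 a ha
    have e2 := h2 b hb
    simp only [map_add, hdd, add_zero, inner_add_left, inner_add_right] at e4 e2 ⊢
    linarith
  · intro u'
    obtain ⟨a, ha, b, hb, rfl⟩ := hsplit (k + 1) u'
    have e3 := h3 a ha
    have e1 := h1 b hb
    simp only [map_add, hdd, add_zero, inner_add_right] at e3 e1 ⊢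
    linarith
end

section
/- Stability of the decomposition Λ^k = B^k ⊕ d_{k-1}(B^{k-1}): let 0 < α ≤ 1 and let u ∈ Λ^k be decomposed as u = ū + d_{k-1} v̄ with ū := p_{k+1}(d_k u) ∈ B^k and v̄ := p_k u ∈ B^{k-1}. Then ‖d_k ū‖² + α²‖d_{k-1} v̄‖² ≤ 2α²‖u‖² + (1 + 2c̄_k²)‖d_k u‖². -/
/-!
An element annihilated by both `proj` and `d` vanishes: the first condition puts it in `B`, and
`d` is injective on `B`. Applied to `d u - d (p (d u))` and then to `u - p (d u) - d (p u)`, this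
gives `d (p (d u)) = d u` and the decomposition `u = p (d u) + d (p u)`. The estimate follows from
`‖d (p u)‖ = ‖u - p (d u)‖`, the inequality `(a + b)² ≤ 2a² + 2b²`, the Poincaré inequality
`‖p (d u)‖ ≤ cb ‖d u‖` and `α² ≤ 1`.
-/

open scoped RealInnerProductSpace

/-- CONTEXT: `Λ k` (k ∈ ℤ) are finite-dimensional real inner product spaces,
`d k : Λ k →ₗ Λ (k+1)` forms an exact sequence, `B k ⊕ R k = Λ k` is a p-permitting
decomposition with projection `proj k` onto `R k` along `B k`, such that
`proj (k+1) ∘ d k` restricted to `B k` is a bijection onto `R (k+1)`.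
Indices are uniformly shifted (using `k+1` in place of `k-1`-style indices), which is an
equivalent quantification since k ranges over all of ℤ. Stability of the decomposition (paper's level
`k` is here `k+1`): for `0 < α ≤ 1`, `cb` a Poincaré constant on `B (k+1)`, and any
`u ∈ Λ (k+1)` with `ub := p (k+1) (d (k+1) u)` and `vb := p k u`, one has
`‖d (k+1) ub‖² + α²‖d k vb‖² ≤ 2α²‖u‖² + (1 + 2cb²)‖d (k+1) u‖²`.
-/
theorem decomposition_stable
    (Λ : ℤ → Type) [∀ k, NormedAddCommGroup (Λ k)]
    [∀ k, InnerProductSpace ℝ (Λ k)] [∀ k, FiniteDimensional ℝ (Λ k)]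
    (d : ∀ k, Λ k →ₗ[ℝ] Λ (k + 1))
    (hexact : ∀ k, LinearMap.range (d k) = LinearMap.ker (d (k + 1)))
    (B R : ∀ k, Submodule ℝ (Λ k))
    (hcompl : ∀ k, IsCompl (B k) (R k))
    (proj : ∀ k, Λ k →ₗ[ℝ] Λ k)
    (hprojR : ∀ k, ∀ u ∈ R k, proj k u = u)
    (hprojB : ∀ k, ∀ u ∈ B k, proj k u = 0)
    (hinj : ∀ k, ∀ b ∈ B k, proj (k + 1) (d k b) = 0 → b = 0)
    (hsurj : ∀ k, ∀ r ∈ R (k + 1), ∃ b ∈ B k, proj (k + 1) (d k b) = r)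
    (p : ∀ k, Λ (k + 1) →ₗ[ℝ] Λ k)
    (hpB : ∀ k u, p k u ∈ B k)
    (hp : ∀ k u, proj (k + 1) (d k (p k u)) = proj (k + 1) u)
    (k : ℤ) (α : ℝ) (hα0 : 0 < α) (hα1 : α ≤ 1)
    (cb : ℝ) (hcb0 : 0 ≤ cb)
    (hcb : ∀ ub ∈ B (k + 1), ‖ub‖ ≤ cb * ‖d (k + 1) ub‖) :
    ∀ u : Λ (k + 1),
      ‖d (k + 1) (p (k + 1) (d (k + 1) u))‖ ^ 2 + α ^ 2 * ‖d k (p k u)‖ ^ 2 ≤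
        2 * α ^ 2 * ‖u‖ ^ 2 + (1 + 2 * cb ^ 2) * ‖d (k + 1) u‖ ^ 2 := by
  have hdd : ∀ j x, d (j + 1) (d j x) = 0 := fun j x => by
    have h : d j x ∈ LinearMap.ker (d (j + 1)) := hexact j ▸ LinearMap.mem_range_self (d j) x
    exact LinearMap.mem_ker.mp h
  have hzero : ∀ j (w : Λ j), proj j w = 0 → d j w = 0 → w = 0 := by
    intro j w hw hdw
    refine hinj j w ?_ (by rw [hdw, map_zero])
    obtain ⟨b, hb, r, hr, rfl⟩ := Submodule.mem_sup.mp
      ((hcompl j).sup_eq_top ▸ Submodule.mem_top : w ∈ B j ⊔ R j)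
    rw [map_add, hprojB j b hb, hprojR j r hr, zero_add] at hw
    rwa [hw, add_zero]
  intro u
  have hd : d (k + 1) (p (k + 1) (d (k + 1) u)) = d (k + 1) u := by
    refine sub_eq_zero.mp (hzero _ _ ?_ ?_)
    · rw [map_sub, hp, sub_self]
    · rw [map_sub, hdd, hdd, sub_zero]
  have hu : u - p (k + 1) (d (k + 1) u) = d k (p k u) := by
    refine sub_eq_zero.mp (hzero _ _ ?_ ?_)
    · rw [map_sub, map_sub, hp, hprojB _ _ (hpB _ _), sub_zero, sub_self]
    · rw [map_sub, map_sub, hdd, hd, sub_self, sub_zero]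
  have hb := hcb _ (hpB (k + 1) (d (k + 1) u))
  have ht := norm_sub_le u (p (k + 1) (d (k + 1) u))
  rw [hd] at hb ⊢
  rw [hu] at ht
  have hb2 := pow_le_pow_left₀ (norm_nonneg _) hb 2
  have ht2 := (pow_le_pow_left₀ (norm_nonneg _) ht 2).trans add_sq_le
  have hv : ‖d k (p k u)‖ ^ 2 ≤ 2 * ‖u‖ ^ 2 + 2 * (cb * ‖d (k + 1) u‖) ^ 2 := by linarith
  have hα : α ^ 2 ≤ 1 := pow_le_one₀ hα0.le hα1
  have h1 := mul_le_mul_of_nonneg_left hv (sq_nonneg α)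
  have h2 := mul_le_mul_of_nonneg_right hα (sq_nonneg (cb * ‖d (k + 1) u‖))
  linarith [mul_pow cb ‖d (k + 1) u‖ 2]
end
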